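/- arXiv:1904.07007 — 2 statements merged into one kernel-verified Lean document; each statement's English description precedes it below -/
import Mathlib

section
/- Let β ∈ (1,2) be a multinacci number. Then for every t ∈ B_β and every r > 0, the interval (t, t + r) contains infinitely many β-Lyndon intervals. -/
open Set Filter MeasureTheory

/-- The β-transformation `x ↦ βx (mod 1)`. -/
noncomputable def Tbeta (β x : ℝ) : ℝ := Int.fract (β * x)

/-- The survivor set `K_β(t) = {x ∈ [0,1) : T_β^n x ≥ t for all n ≥ 0}`. -/
def Kset (β t : ℝ) : Set ℝ := {x | x ∈ Set.Ico (0 : ℝ) 1 ∧ ∀ n : ℕ, t ≤ (Tbeta β)^[n] x}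

/-- Strict lexicographic order on sequences of naturals. -/
def seqLt (x y : ℕ → ℕ) : Prop := ∃ n, (∀ i, i < n → x i = y i) ∧ x n < y n

/-- Lexicographic order on sequences of naturals. -/
def seqLe (x y : ℕ → ℕ) : Prop := x = y ∨ seqLt x y

/-- The `n`-th iterate of the left shift. -/
def shiftN (n : ℕ) (x : ℕ → ℕ) : ℕ → ℕ := fun i => x (i + n)

/-- The sequence `w 0^∞`. -/
def wordSeq (w : List ℕ) : ℕ → ℕ := fun i => w.getD i 0

/-- The periodic sequence `w^∞`. -/
def perSeq (w : List ℕ) : ℕ → ℕ := fun i => w.getD (i % w.length) 0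

/-- The sequence obtained by concatenating the word `w` with the sequence `x`. -/
def catSeq (w : List ℕ) (x : ℕ → ℕ) : ℕ → ℕ :=
  fun i => if i < w.length then w.getD i 0 else x (i - w.length)

/-- The greedy β-expansion of `t`: the digit `b_{i+1}` is `⌊β T_β^i t⌋`. -/
noncomputable def greedy (β t : ℝ) : ℕ → ℕ := fun i => (⌊β * (Tbeta β)^[i] t⌋).toNat

/-- `d` is the quasi-greedy β-expansion of `1`: the lexicographically largest
sequence in `{0,1}^ℕ` not ending in `0^∞` whose digits sum to `1` in base `β`. -/
def IsQuasiGreedy (β : ℝ) (d : ℕ → ℕ) : Prop :=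
  (∀ i, d i ≤ 1) ∧ (¬ ∃ N, ∀ n, N ≤ n → d n = 0) ∧
  (∑' i : ℕ, (d i : ℝ) / β ^ (i + 1) = 1) ∧
  ∀ e : ℕ → ℕ, (∀ i, e i ≤ 1) → (¬ ∃ N, ∀ n, N ≤ n → e n = 0) →
    (∑' i : ℕ, (e i : ℝ) / β ^ (i + 1) = 1) → seqLe e d

/-- `s = s_1…s_p` is a β-Lyndon word: `s_{i+1}…s_p ≻ s_1…s_{p-i}` for `1 ≤ i < p`
and `σ^n(s^∞) ≺ δ(β)` for all `n ≥ 0`. -/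
def IsBetaLyndon (β : ℝ) (s : List ℕ) : Prop :=
  s ≠ [] ∧ (∀ a ∈ s, a ≤ 1) ∧
  (∀ i, 1 ≤ i → i < s.length →
    seqLt (wordSeq (s.take (s.length - i))) (wordSeq (s.drop i))) ∧
  (∀ d : ℕ → ℕ, IsQuasiGreedy β d → ∀ n : ℕ, seqLt (shiftN n (perSeq s)) d)

/-- Left endpoint `t_L = Σ_{i=1}^p s_i β^{-i}` of the β-Lyndon interval generated by `s`. -/
noncomputable def lyndonLeft (β : ℝ) (s : List ℕ) : ℝ :=
  ∑ i ∈ Finset.range s.length, (s.getD i 0 : ℝ) / β ^ (i + 1)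

/-- Right endpoint `t_R = (β^p/(β^p - 1)) t_L` of the β-Lyndon interval generated by `s`. -/
noncomputable def lyndonRight (β : ℝ) (s : List ℕ) : ℝ :=
  β ^ s.length / (β ^ s.length - 1) * lyndonLeft β s

/-- The union of all β-Lyndon intervals `[t_L, t_R)`. -/
noncomputable def lyndonUnionIco (β : ℝ) : Set ℝ :=
  ⋃ s ∈ {s : List ℕ | IsBetaLyndon β s}, Set.Ico (lyndonLeft β s) (lyndonRight β s)

/-- The symbolic survivor set `K̃_β(t)` with upper bound sequence `d = δ(β)`. -/
def Ktilde (β t : ℝ) (d : ℕ → ℕ) : Set (ℕ → ℕ) :=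
  {x | (∀ i, x i ≤ 1) ∧ ∀ n : ℕ, seqLe (greedy β t) (shiftN n x) ∧ seqLe (shiftN n x) d}

/-- The set-valued bifurcation set `E_β`. -/
def Eset (β : ℝ) : Set ℝ :=
  {t | t ∈ Set.Ico (0 : ℝ) 1 ∧ ∀ t', t < t' → t' < 1 → Kset β t' ≠ Kset β t}

/-- The dimension bifurcation set `B_β`. -/
def Bset (β : ℝ) : Set ℝ :=
  {t | t ∈ Set.Ico (0 : ℝ) 1 ∧ ∀ t', t < t' → t' < 1 → dimH (Kset β t') ≠ dimH (Kset β t)}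

/-- `β` is a multinacci number: `β^{m+1} = β^m + ⋯ + β + 1` for some `m ≥ 1`. -/
def IsMultinacci (β : ℝ) : Prop :=
  ∃ m : ℕ, 1 ≤ m ∧ β ^ (m + 1) = ∑ i ∈ Finset.range (m + 1), β ^ i

lemma T_mem (β : ℝ) {t : ℝ} (ht : t ∈ Set.Ico (0:ℝ) 1) (n : ℕ) :
    (Tbeta β)^[n] t ∈ Set.Ico (0:ℝ) 1 := by
  cases n with
  | zero => simpa using ht
  | succ k =>
    rw [Function.iterate_succ_apply']
    exact ⟨Int.fract_nonneg _, Int.fract_lt_one _⟩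

lemma greedy_spec {β : ℝ} (hβ : β ∈ Set.Ioo (1 : ℝ) 2) {t : ℝ} (ht : t ∈ Set.Ico (0:ℝ) 1) (n : ℕ) :
    greedy β t n ≤ 1 ∧ (Tbeta β)^[n+1] t = β * (Tbeta β)^[n] t - (greedy β t n : ℝ) := by
  have h := T_mem β ht n
  rw [Function.iterate_succ_apply']
  unfold greedy
  set x := (Tbeta β)^[n] t
  obtain ⟨h0, h1⟩ := h
  obtain ⟨b1, b2⟩ := hβ
  have hf : 0 ≤ ⌊β * x⌋ := Int.floor_nonneg.2 (by positivity)
  have hf2 : ⌊β * x⌋ < 2 := by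
    rw [Int.floor_lt]; push_cast; nlinarith
  refine ⟨by omega, ?_⟩
  have : ((⌊β * x⌋.toNat : ℕ) : ℝ) = ((⌊β * x⌋ : ℤ) : ℝ) := by
    have := Int.toNat_of_nonneg hf
    exact_mod_cast this
  rw [this]
  rfl

/-- digits are monotone at the first difference -/
lemma digit_mono {β : ℝ} (hβ : β ∈ Set.Ioo (1 : ℝ) 2) {x y : ℝ} (hx : x ∈ Set.Ico (0:ℝ) 1)
    (hy : y ∈ Set.Ico (0:ℝ) 1) (hxy : x ≤ y) (k : ℕ)
    (h : ∀ j < k, greedy β x j = greedy β y j) : greedy β x k ≤ greedy β y k := by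
  have key : ∀ j ≤ k, (Tbeta β)^[j] x ≤ (Tbeta β)^[j] y := by
    intro j
    induction j with
    | zero => intro _; simpa using hxy
    | succ j ih =>
      intro hj
      have h1 := ih (by omega)
      rw [(greedy_spec hβ hx j).2, (greedy_spec hβ hy j).2, h j (by omega)]
      have := hβ.1
      nlinarith
  have := key k le_rfl
  unfold greedy
  apply Int.toNat_le_toNat
  apply Int.floor_le_floor
  have := hβ.1
  nlinarith

lemma ones_run {β : ℝ} (hβ : β ∈ Set.Ioo (1 : ℝ) 2) {t : ℝ} (ht : t ∈ Set.Ico (0:ℝ) 1) (i k : ℕ)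
    (h : ∀ j < k, greedy β t (i + j) = 1) :
    (Tbeta β)^[i + k] t = β ^ k * (Tbeta β)^[i] t - ∑ j ∈ Finset.range k, β ^ j := by
  induction k with
  | zero => simp
  | succ k ih =>
    have e := (greedy_spec hβ ht (i + k)).2
    rw [← add_assoc, e, ih (fun j hj => h j (by omega)), h k (by omega), Finset.sum_range_succ',
      mul_sub, Finset.mul_sum]
    simp only [pow_succ']
    push_cast
    ring

lemma no_ones {β : ℝ} (hβ : β ∈ Set.Ioo (1 : ℝ) 2) {t : ℝ} (ht : t ∈ Set.Ico (0:ℝ) 1) {m : ℕ}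
    (hm : β ^ (m + 1) = ∑ i ∈ Finset.range (m + 1), β ^ i) (i : ℕ)
    (h : ∀ j < m + 1, greedy β t (i + j) = 1) : False := by
  have e := ones_run hβ ht i (m+1) h
  rw [← hm] at e
  have h1 := (T_mem β ht (i + (m+1))).1
  have h2 := (T_mem β ht i).2
  have h3 : 0 < β ^ (m+1) := pow_pos (by linarith [hβ.1]) _
  nlinarith

lemma run_zero {β : ℝ} (hβ : β ∈ Set.Ioo (1 : ℝ) 2) {t : ℝ} (ht : t ∈ Set.Ico (0:ℝ) 1) {m : ℕ}
    (hm : β ^ (m + 1) = ∑ i ∈ Finset.range (m + 1), β ^ i) (i : ℕ)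
    (h : ∀ j < m, greedy β t (i + j) = 1) (h0 : greedy β t (i + m) = 0) :
    1 - (Tbeta β)^[i + (m + 1)] t = β ^ (m+1) * (1 - (Tbeta β)^[i] t) := by
  have e := ones_run hβ ht i m h
  have e2 := (greedy_spec hβ ht (i + m)).2
  rw [← add_assoc, e2, e, h0]
  rw [Finset.sum_range_succ'] at hm
  simp only [pow_succ', pow_zero] at hm
  rw [← Finset.mul_sum] at hm
  rw [pow_succ']
  push_cast
  linear_combination -hm

lemma exists_bad {β : ℝ} (hβ : β ∈ Set.Ioo (1 : ℝ) 2) {t : ℝ} (ht : t ∈ Set.Ico (0:ℝ) 1) {m : ℕ}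
    (hm : β ^ (m + 1) = ∑ i ∈ Finset.range (m + 1), β ^ i) (N : ℕ) :
    ∃ n ≥ N + m, greedy β t n = 0 ∧ ∃ j < n, n ≤ j + m ∧ greedy β t j = 0 := by
  by_contra hcon
  push Not at hcon
  have hd : ∀ i, greedy β t i = 0 ∨ greedy β t i = 1 := fun i => by
    have := (greedy_spec hβ ht i).1; omega
  -- next zero
  have hz : ∀ i, ∃ k, i ≤ k ∧ k ≤ i + m ∧ greedy β t k = 0 := by
    intro i
    by_contra hc
    push Not at hc
    refine no_ones hβ ht hm i (fun j hj => ?_)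
    have := hc (i + j) (by omega) (by omega)
    have := hd (i + j)
    omega
  obtain ⟨k, hk1, -, hk0⟩ := hz (N + m)
  have step : ∀ k, N + m ≤ k → greedy β t k = 0 → (∀ j < m, greedy β t (k + 1 + j) = 1) ∧
      greedy β t (k + 1 + m) = 0 := by
    intro k hk h0
    obtain ⟨k', h1, h2, h3⟩ := hz (k+1)
    have h4 := hcon k' (by omega) h3
    have h5 : k' = k + 1 + m := by
      by_contra hne
      exact h4 k (by omega) (by omega) h0
    subst h5
    refine ⟨fun j hj => ?_, h3⟩
    have := h4 (k + 1 + j) (by omega) (by omega)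
    have := hd (k + 1 + j)
    omega
  have it : ∀ q : ℕ, greedy β t (k + q * (m+1)) = 0 ∧
      1 - (Tbeta β)^[k + 1 + q * (m+1)] t = (β ^ (m+1)) ^ q * (1 - (Tbeta β)^[k+1] t) := by
    intro q
    induction q with
    | zero => simpa using hk0
    | succ q ih =>
      obtain ⟨s1, s2⟩ := step (k + q * (m+1)) (by nlinarith) ih.1
      constructor
      · rw [← s2]; congr 1; ring
      · have := run_zero hβ ht hm _ s1 s2
        have e1 : k + 1 + (q + 1) * (m + 1) = k + q * (m + 1) + 1 + (m + 1) := by ring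
        have e2 : k + 1 + q * (m + 1) = k + q * (m + 1) + 1 := by ring
        rw [e1, this, ← e2, ih.2]; ring
  have hpos : 0 < 1 - (Tbeta β)^[k+1] t := by linarith [(T_mem β ht (k+1)).2]
  have hb : 1 < β ^ (m+1) := one_lt_pow₀ hβ.1 (by omega)
  obtain ⟨q, hq⟩ := pow_unbounded_of_one_lt (1 / (1 - (Tbeta β)^[k+1] t)) hb
  rw [div_lt_iff₀ hpos] at hq
  have := (it q).2
  linarith [(T_mem β ht (k + 1 + q * (m+1))).1]

/-- the sequence `(1^m 0)^∞` -/
def eSeq (m : ℕ) : ℕ → ℕ := fun i => if i % (m + 1) = m then 0 else 1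

lemma eSeq_sum {β : ℝ} (hβ : β ∈ Set.Ioo (1 : ℝ) 2) {m : ℕ}
    (hm : β ^ (m + 1) = ∑ i ∈ Finset.range (m + 1), β ^ i) :
    ∑' i : ℕ, (eSeq m i : ℝ) / β ^ (i + 1) = 1 := by
  have hb : 0 < β := by linarith [hβ.1]
  let r : ℕ → ℝ := fun k => β ^ k - ∑ j ∈ Finset.range k, β ^ j
  have hr : ∀ k, r (k+1) = β * r k - 1 := by
    intro k
    simp only [r, Finset.sum_range_succ', mul_sub, Finset.mul_sum, pow_succ', pow_zero]
    ring
  have hR : ∀ n, r ((n+1) % (m+1)) = β * r (n % (m+1)) - eSeq m n := by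
    intro n
    unfold eSeq
    split_ifs with h
    · have : (n+1) % (m+1) = 0 := by
        rw [Nat.add_mod, h]
        rcases Nat.eq_zero_or_pos m with rfl | h'
        · simp
        · rw [Nat.mod_eq_of_lt (a := 1) (by omega)]; simp
      rw [this, h]
      have h2 := hr m
      have h3 : r (m+1) = 0 := by simp only [r]; rw [← hm]; ring
      have h4 : r 0 = 1 := by simp [r]
      push_cast
      linarith
    · have hlt := Nat.mod_lt n (show 0 < m + 1 by omega)
      have : (n+1) % (m+1) = n % (m+1) + 1 := by
        rw [Nat.add_mod, Nat.mod_eq_of_lt (a := 1) (by omega), Nat.mod_eq_of_lt (by omega)]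
      rw [this, hr]
      simp
  have hS : ∀ n, ∑ i ∈ Finset.range n, (eSeq m i : ℝ) / β ^ (i + 1) = 1 - r (n % (m+1)) * (β⁻¹) ^ n := by
    intro n
    induction n with
    | zero => simp [r]
    | succ n ih =>
      rw [Finset.sum_range_succ, ih, hR, inv_pow, inv_pow]
      field_simp
      ring
  apply HasSum.tsum_eq
  rw [hasSum_iff_tendsto_nat_of_nonneg (fun i => by positivity)]
  simp_rw [hS]
  have hlim : Tendsto (fun n : ℕ => r (n % (m+1)) * (β⁻¹) ^ n) atTop (nhds 0) := by
    apply bdd_le_mul_tendsto_zero' (∑ k ∈ Finset.range (m+1), |r k|)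
    · refine Eventually.of_forall (fun n => ?_)
      exact Finset.single_le_sum (f := fun k => |r k|) (fun _ _ => abs_nonneg _)
        (Finset.mem_range.2 (Nat.mod_lt n (by omega)))
    · exact tendsto_pow_atTop_nhds_zero_of_lt_one (by positivity) (inv_lt_one_of_one_lt₀ hβ.1)
  simpa using hlim.const_sub 1

lemma eSeq_nz {m : ℕ} (hm : 1 ≤ m) : ¬ ∃ N, ∀ n, N ≤ n → eSeq m n = 0 := by
  rintro ⟨N, h⟩
  have := h (N * (m+1)) (by nlinarith)
  unfold eSeq at this
  rw [Nat.mul_mod_left] at this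
  split_ifs at this with h
  omega

lemma lt_eSeq {m : ℕ} {x : ℕ → ℕ} (hx : ∀ i, x i ≤ 1)
    (hno : ∀ i, ∃ j ≤ m, x (i + j) = 0) (hne : x ≠ eSeq m) : seqLt x (eSeq m) := by
  have hex : ∃ k, x k ≠ eSeq m k := by
    by_contra h
    push Not at h
    exact hne (funext h)
  classical
  refine ⟨Nat.find hex, fun i hi => ?_, ?_⟩
  · have := Nat.find_min hex hi
    push Not at this; exact this
  · set k := Nat.find hex with hk
    have h1 : x k ≠ eSeq m k := Nat.find_spec hex
    have hmin : ∀ i < k, x i = eSeq m i := fun i hi => by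
      have := Nat.find_min hex hi
      push Not at this; exact this
    by_cases he : k % (m+1) = m
    · exfalso
      have e0 : eSeq m k = 0 := by simp [eSeq, he]
      have hkm : m ≤ k := he ▸ Nat.mod_le _ _
      obtain ⟨j, hj, hj0⟩ := hno (k - m)
      rcases Nat.lt_or_eq_of_le hj with hj | rfl
      · rw [hmin _ (by omega)] at hj0
        unfold eSeq at hj0
        split_ifs at hj0 with h
        have hd := Nat.div_add_mod k (m+1)
        rw [he] at hd
        have : k - m + j = (m+1) * (k / (m+1)) + j := by omega
        rw [this, Nat.mul_add_mod, Nat.mod_eq_of_lt (by omega)] at h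
        omega
      · rw [show k - j + j = k by omega] at hj0
        omega
    · have e1 : eSeq m k = 1 := by simp [eSeq, he]
      have := hx k
      omega

lemma seqLt_of_le {x y z : ℕ → ℕ} (h : seqLt x y) (h2 : seqLe y z) : seqLt x z := by
  rcases h2 with rfl | ⟨b, hb, hb'⟩
  · exact h
  obtain ⟨a, ha, ha'⟩ := h
  rcases lt_trichotomy a b with h | h | h
  · exact ⟨a, fun i hi => (ha i hi).trans (hb i (by omega)), by rw [← hb a h]; exact ha'⟩
  · subst h
    exact ⟨a, fun i hi => (ha i hi).trans (hb i hi), ha'.trans hb'⟩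
  · exact ⟨b, fun i hi => (ha i (by omega)).trans (hb i hi), by rw [ha b h]; exact hb'⟩

/-- the word `b_0 … b_{n-1} 1` -/
def wrd (b : ℕ → ℕ) (n : ℕ) : List ℕ := (List.range (n+1)).map (fun i => if i < n then b i else 1)

lemma wrd_len (b : ℕ → ℕ) (n : ℕ) : (wrd b n).length = n + 1 := by simp [wrd]

lemma wrd_lt (b : ℕ → ℕ) {n i : ℕ} (h : i < n) : (wrd b n).getD i 0 = b i := by
  rw [List.getD_eq_getElem _ _ (by rw [wrd_len]; omega)]
  simp [wrd, h]

lemma wrd_eq (b : ℕ → ℕ) (n : ℕ) : (wrd b n).getD n 0 = 1 := by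
  rw [List.getD_eq_getElem _ _ (by rw [wrd_len]; omega)]
  simp [wrd]

lemma wrd_le {b : ℕ → ℕ} (hb : ∀ i, b i ≤ 1) (n : ℕ) : ∀ a ∈ wrd b n, a ≤ 1 := by
  intro a ha
  simp only [wrd, List.mem_map] at ha
  obtain ⟨i, -, rfl⟩ := ha
  split_ifs
  · exact hb i
  · rfl

lemma wrd_lyndon {β : ℝ} (hβ : β ∈ Set.Ioo (1 : ℝ) 2) {t : ℝ} (ht : t ∈ Set.Ico (0:ℝ) 1) {m : ℕ}
    (hm1 : 1 ≤ m)
    (hm : β ^ (m + 1) = ∑ i ∈ Finset.range (m + 1), β ^ i)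
    (hsurv : ∀ n, t ≤ (Tbeta β)^[n] t) {n k j₀ j : ℕ} 
    (hk0 : greedy β t k = 0) (hj₀k : j₀ < k) (hkj₀ : k ≤ j₀ + m) (hj₀ : greedy β t j₀ = 0)
    (hkn : k < n)
    (hn0 : greedy β t n = 0) (hjn : j < n) (hnj : n ≤ j + m) (hj : greedy β t j = 0) :
    IsBetaLyndon β (wrd (greedy β t) n) := by
  set b := greedy β t with hb
  have hb1 : ∀ i, b i ≤ 1 := fun i => (greedy_spec hβ ht i).1
  have hsh : ∀ i l, greedy β ((Tbeta β)^[i] t) l = b (l + i) := by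
    intro i l
    simp only [hb, greedy, Function.iterate_add_apply]
  have hb0 : b 0 = 0 := by
    have := digit_mono hβ ht (T_mem β ht k) (hsurv k) 0 (by simp)
    rw [hsh, zero_add] at this
    change b 0 ≤ b k at this
    omega
  have hlen := wrd_len b n
  refine ⟨?_, wrd_le hb1 n, ?_, ?_⟩
  · intro h; rw [h] at hlen; simp at hlen
  · intro i hi1 hi2
    rw [hlen] at hi2
    have hT : ∀ l < n + 1 - i, wordSeq ((wrd b n).take ((wrd b n).length - i)) l = b l := by
      intro l hl
      unfold wordSeq
      rw [← wrd_lt b (show l < n by omega), hlen]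
      simp only [List.getD_eq_getElem?_getD]
      rw [List.getElem?_take_of_lt hl]
    have hD : ∀ l, wordSeq ((wrd b n).drop i) l = (wrd b n).getD (i + l) 0 := by
      intro l
      unfold wordSeq
      simp only [List.getD_eq_getElem?_getD, List.getElem?_drop]
    have hex : ∃ l, l < n + 1 - i ∧ b l ≠ (wrd b n).getD (i + l) 0 ∨ l = n - i := ⟨n - i, Or.inr rfl⟩
    classical
    set l := Nat.find hex with hl
    have hmin : ∀ j < l, j < n - i ∧ b j = b (j + i) := by
      intro j hj
      have hle : l ≤ n - i := Nat.find_min' hex (Or.inr rfl)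
      have := Nat.find_min hex hj
      push Not at this
      refine ⟨by omega, ?_⟩
      rw [this.1 (by omega), wrd_lt b (by omega), add_comm]
    have hle : l ≤ n - i := Nat.find_min' hex (Or.inr rfl)
    have hmono : b l ≤ b (l + i) := by
      have := digit_mono hβ ht (T_mem β ht i) (hsurv i) l (fun j hj => by
        rw [hsh]; exact (hmin j hj).2)
      rwa [hsh] at this
    refine ⟨l, fun j hj => ?_, ?_⟩
    · rw [hT j (by omega), hD, wrd_lt b (by have := hmin j hj; omega), (hmin j hj).2, add_comm]
    · rw [hT l (by omega), hD]
      rcases Nat.lt_or_eq_of_le hle with h | h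
      · rcases Nat.find_spec hex with h' | h'
        · have h2 := h'.2
          rw [← hl] at h2
          rw [wrd_lt b (by omega)] at h2 ⊢
          rw [add_comm i l] at h2 ⊢
          omega
        · omega
      · rw [show i + l = n by omega, wrd_eq]
        rw [show l + i = n by omega] at hmono
        omega
  · intro d hd q
    refine seqLt_of_le (y := eSeq m) ?_ (hd.2.2.2 (eSeq m) ?_ (eSeq_nz hm1) (eSeq_sum hβ hm))
    swap
    · intro i; unfold eSeq; split_ifs <;> omega
    have hper : ∀ i, perSeq (wrd b n) i = (wrd b n).getD (i % (n+1)) 0 := by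
      intro i; unfold perSeq; rw [hlen]
    apply lt_eSeq
    · intro i
      unfold shiftN
      rw [hper]
      have : (i + q) % (n+1) < n + 1 := Nat.mod_lt _ (by omega)
      rcases Nat.lt_or_eq_of_le (Nat.lt_succ_iff.1 this) with h | h
      · rw [wrd_lt b h]; exact hb1 _
      · rw [h, wrd_eq]
    · intro i
      unfold shiftN
      simp only [hper]
      set c := (i + q) % (n+1) with hc
      have hclt : c < n + 1 := Nat.mod_lt _ (by omega)
      have hcj : ∀ j, (i + j + q) % (n+1) = (c + j) % (n+1) := by
        intro j
        rw [show i + j + q = (i + q) + j by ring, Nat.add_mod, ← hc]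
        simp
      simp only [hcj]
      rcases lt_trichotomy (c + m) n with h | h | h
      · by_contra hcon
        push Not at hcon
        refine no_ones hβ ht hm c (fun j hj => ?_)
        have := hcon j (by omega)
        rw [Nat.mod_eq_of_lt (by omega), wrd_lt b (by omega)] at this
        have := hb1 (c + j)
        change b (c + j) = 1
        omega
      · refine ⟨j - c, by omega, ?_⟩
        rw [show c + (j - c) = j by omega, Nat.mod_eq_of_lt (by omega), wrd_lt b (by omega), hj]
      · refine ⟨n + 1 - c, by omega, ?_⟩
        rw [show c + (n + 1 - c) = n + 1 by omega, Nat.mod_self, wrd_lt b (by omega), hb0]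
    · intro he
      have h1 := congrFun he (q * n + j₀)
      have h2 := congrFun he (q * n + k)
      unfold shiftN at h1 h2
      rw [hper, show q * n + j₀ + q = (n+1) * q + j₀ by ring, Nat.mul_add_mod,
        Nat.mod_eq_of_lt (by omega), wrd_lt b (by omega), hj₀] at h1
      rw [hper, show q * n + k + q = (n+1) * q + k by ring, Nat.mul_add_mod,
        Nat.mod_eq_of_lt (by omega), wrd_lt b (by omega), hk0] at h2
      unfold eSeq at h1 h2
      split_ifs at h1 h2 with a1 a2
      have a3 : (q * n + k) % (m+1) = (q * n + j₀) % (m+1) := by rw [a1, a2]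
      have a4 := (Nat.modEq_iff_dvd' (show q * n + j₀ ≤ q * n + k by omega)).1 a3.symm
      have := Nat.le_of_dvd (by omega) a4
      omega

lemma t_eq {β : ℝ} (hβ : β ∈ Set.Ioo (1 : ℝ) 2) {t : ℝ} (ht : t ∈ Set.Ico (0:ℝ) 1) (n : ℕ) :
    t = ∑ i ∈ Finset.range n, (greedy β t i : ℝ) / β ^ (i+1) + (Tbeta β)^[n] t / β ^ n := by
  have hb : 0 < β := by linarith [hβ.1]
  induction n with
  | zero => simp
  | succ n ih =>
    rw [Finset.sum_range_succ, (greedy_spec hβ ht n).2]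
    conv_lhs => rw [ih]
    field_simp
    ring

lemma wrd_left {β : ℝ} (hβ : β ∈ Set.Ioo (1 : ℝ) 2) {t : ℝ} (ht : t ∈ Set.Ico (0:ℝ) 1) {n : ℕ}
    (h0 : greedy β t n = 0) :
    t < lyndonLeft β (wrd (greedy β t) n) ∧
    lyndonLeft β (wrd (greedy β t) n) ≤ t + 1 / β ^ (n+1) := by
  have hb : 0 < β := by linarith [hβ.1]
  have h1 := t_eq hβ ht (n+1)
  rw [Finset.sum_range_succ, h0] at h1
  have h2 : lyndonLeft β (wrd (greedy β t) n) =
      ∑ i ∈ Finset.range n, (greedy β t i : ℝ) / β ^ (i+1) + 1 / β ^ (n+1) := by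
    unfold lyndonLeft
    rw [wrd_len, Finset.sum_range_succ, wrd_eq]
    push_cast
    congr 1
    apply Finset.sum_congr rfl
    intro i hi
    rw [wrd_lt _ (Finset.mem_range.1 hi)]
  obtain ⟨m1, m2⟩ := T_mem β ht (n+1)
  have hp : 0 < β ^ (n+1) := by positivity
  have h3 : 0 ≤ (Tbeta β)^[n+1] t / β ^ (n+1) := by positivity
  have h4 : (Tbeta β)^[n+1] t / β ^ (n+1) < 1 / β ^ (n+1) := by gcongr
  simp only [Nat.cast_zero, zero_div, add_zero] at h1
  rw [h2]
  constructor <;> linarith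

lemma surv {β : ℝ} (hβ : β ∈ Set.Ioo (1 : ℝ) 2) {t : ℝ} (ht : t ∈ Bset β) (n : ℕ) :
    t ≤ (Tbeta β)^[n] t := by
  obtain ⟨ht, hB⟩ := ht
  by_contra hlt
  push Not at hlt
  have hrc : ∀ n, ∀ ε > 0, ∃ δ > 0, ∀ y, t ≤ y → y < t + δ →
      (Tbeta β)^[n] t ≤ (Tbeta β)^[n] y ∧ (Tbeta β)^[n] y < (Tbeta β)^[n] t + ε := by
    intro n
    induction n with
    | zero =>
      intro ε hε
      exact ⟨ε, hε, fun y h1 h2 => ⟨by simpa using h1, by simpa using h2⟩⟩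
    | succ n ih =>
      intro ε hε
      have hb : 0 < β := by linarith [hβ.1]
      set x := (Tbeta β)^[n] t with hx
      have hfr := Int.fract_lt_one (β * x)
      obtain ⟨δ, hδ, h⟩ := ih (min ε (1 - Int.fract (β * x)) / β)
        (div_pos (lt_min hε (by linarith)) hb)
      refine ⟨δ, hδ, fun y h1 h2 => ?_⟩
      obtain ⟨h3, h4⟩ := h y h1 h2
      rw [Function.iterate_succ_apply', Function.iterate_succ_apply', ← hx]
      set z := (Tbeta β)^[n] y
      unfold Tbeta
      have h5 : β * z < β * x + min ε (1 - Int.fract (β * x)) := by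
        rw [← sub_lt_iff_lt_add', lt_div_iff₀ hb] at h4
        linarith
      have h6 : β * x ≤ β * z := by nlinarith
      have h7 := min_le_left ε (1 - Int.fract (β * x))
      have h8 := min_le_right ε (1 - Int.fract (β * x))
      have h9 := Int.floor_add_fract (β * x)
      have h10 := Int.fract_nonneg (β * x)
      have hfl : ⌊β * z⌋ = ⌊β * x⌋ := by
        rw [Int.floor_eq_iff]
        constructor <;> linarith
      have h11 := Int.floor_add_fract (β * z)
      rw [hfl] at h11
      constructor <;> linarith
  obtain ⟨δ, hδ, h⟩ := hrc n (t - (Tbeta β)^[n] t) (by linarith)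
  have h1 := ht.2
  obtain ⟨t', ht1, ht2⟩ := exists_between (show t < min 1 (t + δ) from lt_min h1 (by linarith))
  rw [lt_min_iff] at ht2
  refine hB t' ht1 ht2.1 ?_
  congr 1
  ext x
  constructor
  · rintro ⟨hx, hx2⟩
    exact ⟨hx, fun n => ht1.le.trans (hx2 n)⟩
  · rintro ⟨hx, hx2⟩
    refine ⟨hx, fun l => ?_⟩
    by_contra hl
    push Not at hl
    have h3 := (h _ (hx2 l) (by linarith)).2
    have h4 := hx2 (n + l)
    rw [Function.iterate_add_apply] at h4
    linarith

lemma small_interval {β : ℝ} (hβ : β ∈ Set.Ioo (1 : ℝ) 2) (hmulti : IsMultinacci β) {t : ℝ}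
    (ht : t ∈ Bset β) {r : ℝ} (hr : 0 < r) :
    ∃ s : List ℕ, IsBetaLyndon β s ∧ (Set.Ico (lyndonLeft β s) (lyndonRight β s)).Nonempty ∧
      Set.Ico (lyndonLeft β s) (lyndonRight β s) ⊆ Set.Ioo t (t + r) := by
  obtain ⟨m, hm1, hm⟩ := hmulti
  have ht0 := ht.1
  obtain ⟨k, -, hk0, j₀, hj1, hj2, hj3⟩ := exists_bad hβ ht0 hm 0
  obtain ⟨N, hN⟩ := pow_unbounded_of_one_lt (3 / r + 1) hβ.1
  obtain ⟨n, hn, hn0, j, hj4, hj5, hj6⟩ := exists_bad hβ ht0 hm (N + k + 1)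
  have hL := wrd_lyndon hβ ht0 hm1 hm (surv hβ ht) hk0 hj1 hj2 hj3 (show k < n by omega)
    hn0 hj4 hj5 hj6
  obtain ⟨l1, l2⟩ := wrd_left hβ ht0 hn0
  refine ⟨_, hL, ?_, ?_⟩
  all_goals
    have hP : β ^ N ≤ β ^ (n+1) := pow_le_pow_right₀ hβ.1.le (by omega)
    have hRdef : lyndonRight β (wrd (greedy β t) n) =
      β ^ (n+1) / (β ^ (n+1) - 1) * lyndonLeft β (wrd (greedy β t) n) := by
        unfold lyndonRight; rw [wrd_len]
    generalize β ^ (n+1) = P at *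
    generalize lyndonLeft β (wrd (greedy β t) n) = L at *
    have h3 : 0 < 3 / r := by positivity
    have hQ : 0 < P - 1 := by linarith
    have hRe : lyndonRight β (wrd (greedy β t) n) = L + L / (P - 1) := by
      rw [hRdef]; field_simp; ring
    have hL0 : 0 < L := lt_of_le_of_lt ht0.1 l1
    rw [hRe]
  · rw [Set.nonempty_Ico]
    have : 0 < L / (P - 1) := by positivity
    linarith
  · intro y hy
    refine ⟨lt_of_lt_of_le l1 hy.1, lt_of_lt_of_le hy.2 ?_⟩
    have h1 : 1 / P ≤ 1 / (P - 1) := one_div_le_one_div_of_le hQ (by linarith)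
    have h1' : 1 / P ≤ 1 := by rw [div_le_one (by linarith)]; linarith
    have hLle : L ≤ 2 := by linarith [ht0.2]
    have h2 : L / (P - 1) ≤ 2 / (P - 1) := by gcongr
    have h5 : 3 / (P - 1) ≤ r := by
      rw [div_le_iff₀ hQ]
      have : 3 / r < P - 1 := by linarith
      rw [div_lt_iff₀ hr] at this
      linarith
    have h6 : 3 / (P - 1) = 1 / (P - 1) + 2 / (P - 1) := by ring
    linarith

/-- For a multinacci `β ∈ (1,2)`, every `t ∈ B_β` and every `r > 0`,
the interval `(t, t + r)` contains infinitely many β-Lyndon intervals. -/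
theorem stmt_11 (β : ℝ) (hβ : β ∈ Set.Ioo (1 : ℝ) 2) (hmulti : IsMultinacci β) :
    ∀ t ∈ Bset β, ∀ r : ℝ, 0 < r →
      {I : Set ℝ | (∃ s : List ℕ, IsBetaLyndon β s ∧
        I = Set.Ico (lyndonLeft β s) (lyndonRight β s)) ∧
        I ⊆ Set.Ioo t (t + r)}.Infinite := by
  intro t ht r hr hfin
  have hev : ∀ᶠ ε in nhdsWithin (0:ℝ) (Set.Ioi 0), ∀ I ∈ {I : Set ℝ | (∃ s : List ℕ, IsBetaLyndon β s ∧
        I = Set.Ico (lyndonLeft β s) (lyndonRight β s)) ∧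
        I ⊆ Set.Ioo t (t + r)}, ¬ (I.Nonempty ∧ I ⊆ Set.Ioo t (t + ε)) := by
    rw [eventually_all_finite hfin]
    rintro I ⟨-, hI⟩
    by_cases hne : I.Nonempty
    · obtain ⟨x, hx⟩ := hne
      have hxt := (hI hx).1
      filter_upwards [Ioo_mem_nhdsGT (show (0:ℝ) < x - t by linarith)] with ε hε
      rintro ⟨-, h⟩
      have := (h hx).2
      linarith [hε.2]
    · exact Eventually.of_forall (fun ε h => hne h.1)
  obtain ⟨ε, h1, h2⟩ := (hev.and (Ioo_mem_nhdsGT hr)).exists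
  obtain ⟨s, hs, hne, hsub⟩ := small_interval hβ hmulti ht h2.1
  refine h1 _ ⟨⟨s, hs, rfl⟩, hsub.trans ?_⟩ ⟨hne, hsub⟩
  exact Set.Ioo_subset_Ioo_right (by linarith [h2.2])
end

section
/- Let β ∈ (1,2) be a multinacci number. Then for t ∈ [0,1), dim_H K_β(t) > 0 if and only if t < 1 − 1/β. -/
open Set Filter MeasureTheory

section aux

/-- value of `1^j 0 x` -/
noncomputable def Dm (β : ℝ) (j : ℕ) (x : ℝ) : ℝ := 1 / (β - 1) - (1 / (β - 1) - x / β) / β ^ j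

lemma Dm_zero (β x : ℝ) : Dm β 0 x = x / β := by simp [Dm]

lemma Dm_succ {β : ℝ} (h1 : 1 < β) (j : ℕ) (x : ℝ) : Dm β (j + 1) x = (1 + Dm β j x) / β := by
  have : β - 1 ≠ 0 := by linarith
  have : β ≠ 0 := by linarith
  unfold Dm
  field_simp
  ring

lemma multi_q {β : ℝ} (h1 : 1 < β) {m : ℕ} (hm : β ^ (m + 1) = ∑ i ∈ Finset.range (m + 1), β ^ i) :
    (2 - β) * β ^ (m + 1) = 1 := by
  have := geom_sum_mul β (m + 1)
  rw [← hm] at this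
  linarith

lemma Dm_top {β : ℝ} (h1 : 1 < β) {m : ℕ} (hq : (2 - β) * β ^ (m + 1) = 1) (x : ℝ) :
    Dm β m x = 1 - (2 - β) * (1 - x) := by
  have h3 : β - 1 ≠ 0 := by linarith
  have h4 : β ≠ 0 := by linarith
  have h5 : β ^ m ≠ 0 := pow_ne_zero _ h4
  have h6 : 1 / β ^ m = β * (2 - β) := by
    rw [pow_succ] at hq
    field_simp
    linarith
  unfold Dm
  rw [div_eq_mul_one_div _ (β ^ m), h6]
  field_simp
  ring

lemma Dm_pred {β : ℝ} (h1 : 1 < β) {m : ℕ} (hm : 1 ≤ m) (hq : (2 - β) * β ^ (m + 1) = 1) (x : ℝ) :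
    Dm β (m - 1) x = 1 - ((2 - β) + β * (2 - β) * (1 - x)) := by
  obtain ⟨k, rfl⟩ : ∃ k, m = k + 1 := ⟨m - 1, by omega⟩
  have h := Dm_top h1 hq x
  rw [Dm_succ h1] at h
  have h4 : β ≠ 0 := by linarith
  field_simp at h
  simp only [Nat.add_sub_cancel]
  linarith

lemma Dm_mem {β : ℝ} (h1 : 1 < β) (h2 : β < 2) {m : ℕ} (hq : (2 - β) * β ^ (m + 1) = 1)
    {x : ℝ} (hx : x ∈ Set.Ico (0:ℝ) 1) {j : ℕ} (hj : j ≤ m) : Dm β j x ∈ Set.Ico (0:ℝ) 1 := by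
  have hp : x / β ≤ 1 / (β - 1) := by
    have : x / β ≤ 1 / β := by gcongr; exact hx.2.le
    have : 1 / β ≤ 1 / (β - 1) := one_div_le_one_div_of_le (by linarith) (by linarith)
    linarith
  have mono : ∀ a b : ℕ, a ≤ b → Dm β a x ≤ Dm β b x := by
    intro a b hab
    unfold Dm
    have : β ^ a ≤ β ^ b := pow_le_pow_right₀ h1.le hab
    have h0 : 0 < β ^ a := by positivity
    have := div_le_div_of_nonneg_left (sub_nonneg.2 hp) h0 this
    linarith
  constructor
  · have := mono 0 j (Nat.zero_le _)
    rw [Dm_zero] at this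
    have : 0 ≤ x / β := div_nonneg hx.1 (by linarith)
    linarith
  · have := mono j m hj
    rw [Dm_top h1 hq] at this
    nlinarith [hx.2]

lemma T_Dm_zero {β : ℝ} (h1 : 1 < β) {x : ℝ} (hx : x ∈ Set.Ico (0:ℝ) 1) :
    Tbeta β (Dm β 0 x) = x := by
  rw [Dm_zero, Tbeta, mul_div_cancel₀ _ (by linarith : β ≠ 0)]
  exact Int.fract_eq_self.2 hx

lemma T_Dm_succ {β : ℝ} (h1 : 1 < β) (h2 : β < 2) {m : ℕ} (hq : (2 - β) * β ^ (m + 1) = 1)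
    {x : ℝ} (hx : x ∈ Set.Ico (0:ℝ) 1) {j : ℕ} (hj : j + 1 ≤ m) :
    Tbeta β (Dm β (j + 1) x) = Dm β j x := by
  rw [Dm_succ h1, Tbeta, mul_div_cancel₀ _ (by linarith : β ≠ 0), Int.fract_one_add]
  exact Int.fract_eq_self.2 (Dm_mem h1 h2 hq hx (by omega))

lemma Titer_Dm {β : ℝ} (h1 : 1 < β) (h2 : β < 2) {m : ℕ} (hq : (2 - β) * β ^ (m + 1) = 1)
    {x : ℝ} (hx : x ∈ Set.Ico (0:ℝ) 1) {j : ℕ} (hj : j ≤ m) :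
    (Tbeta β)^[j] (Dm β j x) = x / β := by
  induction j with
  | zero => simp [Dm_zero]
  | succ j ih =>
    rw [Function.iterate_succ_apply, T_Dm_succ h1 h2 hq hx hj, ih (by omega)]

lemma Tbeta_mem (β x : ℝ) : Tbeta β x ∈ Set.Ico (0:ℝ) 1 :=
  ⟨Int.fract_nonneg _, Int.fract_lt_one _⟩

lemma Titer_mem {β x : ℝ} (hx : x ∈ Set.Ico (0:ℝ) 1) (n : ℕ) :
    (Tbeta β)^[n] x ∈ Set.Ico (0:ℝ) 1 := by
  cases n with
  | zero => exact hx
  | succ n => rw [Function.iterate_succ_apply']; exact Tbeta_mem _ _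

lemma Kset_iter {β t x : ℝ} (hx : x ∈ Kset β t) (n : ℕ) : (Tbeta β)^[n] x ∈ Kset β t := by
  refine ⟨Titer_mem hx.1 n, fun k => ?_⟩
  rw [← Function.iterate_add_apply]
  exact hx.2 _

lemma no_high {β : ℝ} (h1 : 1 < β) (h2 : β < 2) {m : ℕ} (hq : (2 - β) * β ^ (m + 1) = 1)
    {t : ℝ} (ht : 1 - 1 / β ≤ t) {y : ℝ} (hy : y ∈ Kset β t) (hy1 : β - 1 ≤ y) : False := by
  have hb : 0 < β := by linarith
  have step : ∀ y ∈ Kset β t, β - 1 ≤ y →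
      ∃ z ∈ Kset β t, β - 1 ≤ z ∧ 1 - z = β ^ (m + 1) * (1 - y) := by
    intro y hy hy1
    have hP : 0 < β ^ (m + 1) := by positivity
    set x := 1 - β ^ (m + 1) * (1 - y) with hxdef
    have hx : x ∈ Set.Ico (0:ℝ) 1 := by
      have := hy.1.2
      constructor
      · have : β ^ (m + 1) * (1 - y) ≤ β ^ (m + 1) * (2 - β) := by
          apply mul_le_mul_of_nonneg_left _ hP.le
          linarith
        linarith
      · have := mul_pos hP (sub_pos.2 this)
        linarith
    have hD : Dm β m x = y := by
      rw [Dm_top h1 hq, hxdef]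
      linear_combination (y - 1) * hq
    have hT := Titer_Dm h1 h2 hq hx le_rfl
    rw [hD] at hT
    have hT1 : (Tbeta β)^[m + 1] y = x := by
      rw [Function.iterate_succ_apply', hT, ← Dm_zero, T_Dm_zero h1 hx]
    refine ⟨x, ?_, ?_, by rw [hxdef]; ring⟩
    · rw [← hT1]; exact Kset_iter hy _
    · have := hy.2 m
      rw [hT] at this
      have h3 : 1 - 1 / β ≤ x / β := ht.trans this
      have h4 : 1 - 1 / β = (β - 1) / β := by field_simp
      rw [h4] at h3
      exact (div_le_div_iff_of_pos_right hb).1 h3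
  have iter : ∀ n : ℕ, ∃ z ∈ Kset β t, β - 1 ≤ z ∧ 1 - z = (β ^ (m + 1)) ^ n * (1 - y) := by
    intro n
    induction n with
    | zero => exact ⟨y, hy, hy1, by simp⟩
    | succ n ih =>
      obtain ⟨z, hz, hz1, hz2⟩ := ih
      obtain ⟨w, hw, hw1, hw2⟩ := step z hz hz1
      exact ⟨w, hw, hw1, by rw [hw2, hz2]; ring⟩
  have hgt : 1 < β ^ (m + 1) := one_lt_pow₀ h1 (by omega)
  have hpos : 0 < 1 - y := sub_pos.2 hy.1.2
  obtain ⟨n, hn⟩ := pow_unbounded_of_one_lt (1 / (1 - y)) hgt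
  obtain ⟨z, hz, hz1, hz2⟩ := iter n
  rw [div_lt_iff₀ hpos] at hn
  linarith

lemma Kset_empty {β : ℝ} (h1 : 1 < β) (h2 : β < 2) {m : ℕ} (hq : (2 - β) * β ^ (m + 1) = 1)
    {t : ℝ} (ht : 1 - 1 / β ≤ t) : Kset β t = ∅ := by
  have hb : 0 < β := by linarith
  rw [Set.eq_empty_iff_forall_notMem]
  intro x hx
  have hge : ∀ n, 1 / β ≤ (Tbeta β)^[n] x := by
    intro n
    by_contra! hlt
    have hK := Kset_iter hx n
    set y := (Tbeta β)^[n] x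
    have hT : Tbeta β y = β * y := by
      apply Int.fract_eq_self.2
      refine ⟨mul_nonneg hb.le hK.1.1, ?_⟩
      rw [lt_div_iff₀ hb] at hlt
      linarith
    have hK1 := Kset_iter hK 1
    simp only [Function.iterate_one, hT] at hK1
    refine no_high h1 h2 hq ht hK1 ?_
    have : β * (1 - 1 / β) ≤ β * y := mul_le_mul_of_nonneg_left (ht.trans (hK.2 0)) hb.le
    have h4 : β * (1 - 1 / β) = β - 1 := by field_simp
    linarith
  have hstep : ∀ n, 1 / (β - 1) - (Tbeta β)^[n] x = β ^ n * (1 / (β - 1) - x) := by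
    intro n
    induction n with
    | zero => simp
    | succ n ih =>
      rw [Function.iterate_succ_apply']
      have hy := hge n
      have hy2 := Titer_mem (β := β) hx.1 n
      set y := (Tbeta β)^[n] x
      have hT : Tbeta β y = β * y - 1 := by
        unfold Tbeta
        rw [Int.fract_eq_iff]
        rw [div_le_iff₀ hb] at hy
        refine ⟨by linarith, by nlinarith [hy2.2], 1, by push_cast; ring⟩
      have h3 : β - 1 ≠ 0 := by linarith
      rw [hT, pow_succ, mul_assoc, mul_left_comm, ← ih]
      field_simp
      ring
  have h3 : 0 < β - 1 := by linarith
  have hp : 1 < 1 / (β - 1) := by rw [lt_div_iff₀ h3]; linarith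
  have hpos : 0 < 1 / (β - 1) - x := by linarith [hx.1.2]
  obtain ⟨n, hn⟩ := pow_unbounded_of_one_lt ((1 / (β - 1)) / (1 / (β - 1) - x)) h1
  rw [div_lt_iff₀ hpos, ← hstep n] at hn
  linarith [(Titer_mem (β := β) hx.1 n).1]

/-- contraction ratio -/
noncomputable def rho (c q : ℝ) (a : Fin 2) : ℝ := if a = 0 then c else c * q

/-- coding map -/
noncomputable def gfun (c q : ℝ) (w : ℕ → Fin 2) : ℝ :=
  ∑' n : ℕ, q * ∏ i ∈ Finset.range n, rho c q (w i)

lemma rho_le {c q : ℝ} (hc : 0 < c) (hq1 : q < 1) (a : Fin 2) : rho c q a ≤ c := by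
  unfold rho; split_ifs
  · exact le_rfl
  · nlinarith

lemma le_rho {c q : ℝ} (hc : 0 < c) (hq1 : q < 1) (a : Fin 2) : c * q ≤ rho c q a := by
  unfold rho; split_ifs
  · nlinarith
  · exact le_rfl

lemma rho_pos {c q : ℝ} (hc : 0 < c) (hq : 0 < q) (a : Fin 2) : 0 < rho c q a := by
  unfold rho; split_ifs <;> positivity

lemma prod_rho_le {c q : ℝ} (hc : 0 < c) (hq : 0 < q) (hq1 : q < 1) (w : ℕ → Fin 2) (n : ℕ) :
    ∏ i ∈ Finset.range n, rho c q (w i) ≤ c ^ n := by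
  calc _ ≤ ∏ i ∈ Finset.range n, c :=
        Finset.prod_le_prod (fun i _ => (rho_pos hc hq _).le) (fun i _ => rho_le hc hq1 _)
    _ = c ^ n := by simp

lemma gsummable {c q : ℝ} (hc : 0 < c) (hc1 : c < 1) (hq : 0 < q) (hq1 : q < 1) (w : ℕ → Fin 2) :
    Summable (fun n : ℕ => q * ∏ i ∈ Finset.range n, rho c q (w i)) := by
  refine Summable.of_nonneg_of_le (fun n => mul_nonneg hq.le
    (Finset.prod_nonneg fun i _ => (rho_pos hc hq _).le))
    (fun n => mul_le_mul_of_nonneg_left (prod_rho_le hc hq hq1 w n) hq.le) ?_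
  exact (summable_geometric_of_lt_one hc.le hc1).mul_left q

lemma gfun_rec {c q : ℝ} (hc : 0 < c) (hc1 : c < 1) (hq : 0 < q) (hq1 : q < 1) (w : ℕ → Fin 2) :
    gfun c q w = q + rho c q (w 0) * gfun c q (fun i => w (i + 1)) := by
  unfold gfun
  rw [(gsummable hc hc1 hq hq1 w).tsum_eq_zero_add, ← tsum_mul_left]
  simp only [Finset.range_zero, Finset.prod_empty, mul_one]
  congr 1
  apply tsum_congr
  intro n
  rw [Finset.prod_range_succ']
  ring

lemma gfun_le {c q : ℝ} (hc : 0 < c) (hc1 : c < 1) (hq : 0 < q) (hq1 : q < 1) (w : ℕ → Fin 2) :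
    gfun c q w ≤ q / (1 - c) := by
  have h := (hasSum_geometric_of_lt_one hc.le hc1).mul_left q
  rw [div_eq_mul_inv, ← h.tsum_eq]
  exact (gsummable hc hc1 hq hq1 w).tsum_le_tsum
    (fun n => mul_le_mul_of_nonneg_left (prod_rho_le hc hq hq1 w n) hq.le) h.summable

lemma le_gfun {c q : ℝ} (hc : 0 < c) (hc1 : c < 1) (hq : 0 < q) (hq1 : q < 1) (w : ℕ → Fin 2) :
    q ≤ gfun c q w := by
  rw [gfun_rec hc hc1 hq hq1]
  have : 0 ≤ gfun c q (fun i => w (i + 1)) := by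
    unfold gfun
    exact tsum_nonneg fun n => mul_nonneg hq.le
      (Finset.prod_nonneg fun i _ => (rho_pos hc hq _).le)
  nlinarith [mul_nonneg (rho_pos hc hq (w 0)).le this]

lemma gfun_sep {c q : ℝ} (hc : 0 < c) (hc1 : c < 1) (hq : 0 < q) (hq1 : q < 1)
    (n : ℕ) : ∀ (w v : ℕ → Fin 2), (∀ i < n, w i = v i) → w n ≠ v n →
    (c * q) ^ n * (c * q * (1 - q / (1 - c))) ≤ |gfun c q w - gfun c q v| := by
  induction n with
  | zero =>
    have key : ∀ w v : ℕ → Fin 2, w 0 = 0 → v 0 = 1 →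
        (c * q * (1 - q / (1 - c))) ≤ gfun c q w - gfun c q v := by
      intro w v hw hv
      rw [gfun_rec hc hc1 hq hq1 w, gfun_rec hc hc1 hq hq1 v, hw, hv]
      have e1 := le_gfun hc hc1 hq hq1 (fun i => w (i + 1))
      have e2 := gfun_le hc hc1 hq hq1 (fun i => v (i + 1))
      have r0 : rho c q 0 = c := by simp [rho]
      have r1 : rho c q 1 = c * q := by simp [rho]
      rw [r0, r1]
      have f1 := mul_le_mul_of_nonneg_left e1 hc.le
      have f2 := mul_le_mul_of_nonneg_left e2 (mul_pos hc hq).le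
      linarith
    intro w v _ hne
    rw [pow_zero, one_mul]
    have hw : w 0 = 0 ∨ w 0 = 1 := by generalize w 0 = a; fin_cases a <;> simp
    have hv : v 0 = 0 ∨ v 0 = 1 := by generalize v 0 = a; fin_cases a <;> simp
    rcases hw with hw | hw <;> rcases hv with hv | hv
    · exact absurd (hw.trans hv.symm) hne
    · exact (key w v hw hv).trans (le_abs_self _)
    · rw [abs_sub_comm]; exact (key v w hv hw).trans (le_abs_self _)
    · exact absurd (hw.trans hv.symm) hne
  | succ n ih =>
    intro w v h hne
    have := ih (fun i => w (i + 1)) (fun i => v (i + 1)) (fun i hi => h _ (by omega)) hne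
    rw [gfun_rec hc hc1 hq hq1 w, gfun_rec hc hc1 hq hq1 v, h 0 (by omega), add_sub_add_left_eq_sub,
      ← mul_sub, abs_mul, abs_of_pos (rho_pos hc hq _), pow_succ', mul_assoc]
    have h2 : c * q * |gfun c q (fun i => w (i + 1)) - gfun c q (fun i => v (i + 1))| ≤
        rho c q (v 0) * |gfun c q (fun i => w (i + 1)) - gfun c q (fun i => v (i + 1))| :=
      mul_le_mul_of_nonneg_right (le_rho hc hq1 _) (abs_nonneg _)
    exact (mul_le_mul_of_nonneg_left this (mul_pos hc hq).le).trans h2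

open scoped NNReal ENNReal in
lemma dim_pos_of_sep {K : Set ℝ} (h : (ℕ → Fin 2) → ℝ) (hK : ∀ w, h w ∈ K) {ρ δ : ℝ}
    (hρ : 0 < ρ) (hρ1 : ρ < 1) (hδ : 0 < δ)
    (hsep : ∀ n w v, (∀ i < n, w i = v i) → w n ≠ v n → ρ ^ n * δ ≤ |h w - h v|) :
    0 < dimH K := by
  have hinj : Function.Injective h := by
    intro w v hwv
    by_contra hne
    obtain ⟨k, hk⟩ := Function.ne_iff.1 hne
    classical
    have hex : ∃ k, w k ≠ v k := ⟨k, hk⟩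
    have := hsep (Nat.find hex) w v (fun i hi => not_not.1 (Nat.find_min hex hi))
      (Nat.find_spec hex)
    rw [hwv, sub_self, abs_zero] at this
    have : 0 < ρ ^ (Nat.find hex) * δ := by positivity
    linarith
  let f : ℝ → ℝ := fun x => Real.ofDigits (Function.invFun h x)
  have hf : ∀ w, f (h w) = Real.ofDigits w := fun w => by
    simp only [f, Function.leftInverse_invFun hinj w]
  let r : ℝ := Real.log 2 / (- Real.log ρ)
  have hlog : Real.log ρ < 0 := Real.log_neg hρ hρ1
  have hr : 0 < r := div_pos (Real.log_pos (by norm_num)) (by linarith)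
  have hρr : ρ ^ r = 2⁻¹ := by
    rw [Real.rpow_def_of_pos hρ]
    have : Real.log ρ * r = - Real.log 2 := by
      have hne : Real.log ρ ≠ 0 := hlog.ne
      simp only [r]; field_simp
    rw [this, Real.exp_neg, Real.exp_log (by norm_num)]
  let r' : ℝ≥0 := ⟨r, hr.le⟩
  let C : ℝ := (δ ^ r)⁻¹
  have hC : 0 < C := by positivity
  let C' : ℝ≥0 := ⟨C, hC.le⟩
  have hold : HolderOnWith C' r' f (Set.range h) := by
    rintro _ ⟨w, rfl⟩ _ ⟨v, rfl⟩
    by_cases hne : w = v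
    · subst hne; simp
    obtain ⟨k, hk⟩ := Function.ne_iff.1 hne
    classical
    have hex : ∃ k, w k ≠ v k := ⟨k, hk⟩
    have hag : ∀ i < Nat.find hex, w i = v i := fun i hi => not_not.1 (Nat.find_min hex hi)
    have h1 := hsep (Nat.find hex) w v hag (Nat.find_spec hex)
    have h2 := Real.abs_ofDigits_sub_ofDigits_le hag
    generalize Nat.find hex = n at *
    rw [hf, hf, edist_dist, edist_dist, Real.dist_eq, Real.dist_eq]
    have hCe : (C' : ℝ≥0∞) = ENNReal.ofReal C := (ENNReal.ofReal_eq_coe_nnreal hC.le).symm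
    have hre : (r' : ℝ) = r := rfl
    rw [hCe, hre, ENNReal.ofReal_rpow_of_nonneg (abs_nonneg _) hr.le, ← ENNReal.ofReal_mul hC.le]
    apply ENNReal.ofReal_le_ofReal
    refine h2.trans ?_
    have h3 : (ρ ^ n * δ) ^ r ≤ |h w - h v| ^ r :=
      Real.rpow_le_rpow (by positivity) h1 hr.le
    rw [Real.mul_rpow (by positivity) hδ.le, ← Real.rpow_natCast, ← Real.rpow_mul hρ.le,
      mul_comm (n : ℝ), Real.rpow_mul hρ.le, hρr, Real.rpow_natCast] at h3
    have h4 : 0 < δ ^ r := by positivity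
    simp only [C]
    rw [inv_mul_eq_div, le_div_iff₀ h4]
    simpa using h3
  have hdim := hold.dimH_image_le (by exact_mod_cast hr)
  have himg : Set.Icc (0:ℝ) 1 ⊆ f '' (Set.range h) := by
    intro y hy
    obtain ⟨w, -, hw⟩ := Real.ofDigits_SurjOn (b := 2) (by norm_num) hy
    exact ⟨h w, ⟨w, rfl⟩, by rw [hf, hw]⟩
  have hone : dimH (Set.Icc (0:ℝ) 1) = 1 := by
    rw [Real.dimH_of_nonempty_interior (by simp)]; simp
  have h1 := (dimH_mono himg).trans hdim
  rw [hone] at h1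
  refine lt_of_lt_of_le ?_ (dimH_mono (Set.range_subset_iff.2 hK))
  rw [pos_iff_ne_zero]
  intro h0
  rw [h0, ENNReal.zero_div] at h1
  simp at h1

/-- survive for `n` steps -/
def Psurv (β t : ℝ) (n : ℕ) (x : ℝ) : Prop :=
  x ∈ Set.Ico (0 : ℝ) 1 ∧ ∀ i < n, t ≤ (Tbeta β)^[i] x

lemma Psurv_Dm {β : ℝ} (h1 : 1 < β) (h2 : β < 2) {m : ℕ} (hq : (2 - β) * β ^ (m + 1) = 1)
    {t : ℝ} (ht : t < 1 - 1 / β) {n : ℕ} {x : ℝ} (hP : Psurv β t n x) (hx : β * t ≤ x)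
    {j : ℕ} (hj : j ≤ m) : Psurv β t (n + 1) (Dm β j x) := by
  have hb : 0 < β := by linarith
  have hhalf : 1 - 1 / β ≤ 1 / β := by
    have : 1 / 2 ≤ 1 / β := one_div_le_one_div_of_le hb h2.le
    linarith
  induction j with
  | zero =>
    refine ⟨Dm_mem h1 h2 hq hP.1 hj, fun i hi => ?_⟩
    cases i with
    | zero =>
      simp only [Function.iterate_zero, id, Dm_zero]
      rw [le_div_iff₀ hb]; linarith
    | succ i =>
      rw [Function.iterate_succ_apply, T_Dm_zero h1 hP.1]
      exact hP.2 i (by omega)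
  | succ j ih =>
    have ih := ih (by omega)
    refine ⟨Dm_mem h1 h2 hq hP.1 hj, fun i hi => ?_⟩
    cases i with
    | zero =>
      simp only [Function.iterate_zero, id]
      rw [Dm_succ h1]
      have : 1 / β ≤ (1 + Dm β j x) / β := by
        gcongr; linarith [ih.1.1]
      linarith
    | succ i =>
      rw [Function.iterate_succ_apply, T_Dm_succ h1 h2 hq hP.1 hj]
      exact ih.2 i (by omega)

lemma Psurv_iter {β : ℝ} (h1 : 1 < β) (h2 : β < 2) {m : ℕ} (hq : (2 - β) * β ^ (m + 1) = 1)
    {t : ℝ} (ht : t < 1 - 1 / β) {n : ℕ} (k : ℕ) {x : ℝ} (hP : Psurv β t n x) (hx : β * t ≤ x) :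
    Psurv β t n (1 - (2 - β) ^ k * (1 - x)) ∧ β * t ≤ 1 - (2 - β) ^ k * (1 - x) := by
  have hb : 0 < β := by linarith
  have hbt : β * t < β - 1 := by
    have := mul_lt_mul_of_pos_left ht hb
    have h4 : β * (1 - 1 / β) = β - 1 := by field_simp
    linarith
  induction k with
  | zero => simpa using ⟨hP, hx⟩
  | succ k ih =>
    have := Psurv_Dm h1 h2 hq ht ih.1 ih.2 le_rfl
    have e : Dm β m (1 - (2 - β) ^ k * (1 - x)) = 1 - (2 - β) ^ (k + 1) * (1 - x) := by
      rw [Dm_top h1 hq]; ring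
    have hge : β - 1 ≤ Dm β m (1 - (2 - β) ^ k * (1 - x)) := by
      rw [Dm_top h1 hq]
      nlinarith [ih.1.1.1]
    rw [e] at this hge
    exact ⟨⟨this.1, fun i hi => this.2 i (by omega)⟩, by linarith⟩

lemma dim_pos {β : ℝ} (h1 : 1 < β) (h2 : β < 2) {m : ℕ} (hm : 1 ≤ m)
    (hq : (2 - β) * β ^ (m + 1) = 1)
    {t : ℝ} (ht0 : 0 ≤ t) (ht : t < 1 - 1 / β) : 0 < dimH (Kset β t) := by
  have hb : 0 < β := by linarith
  have hbt : β * t < β - 1 := by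
    have := mul_lt_mul_of_pos_left ht hb
    have h4 : β * (1 - 1 / β) = β - 1 := by field_simp
    linarith
  have hbt0 : 0 ≤ β * t := mul_nonneg hb.le ht0
  set q := 2 - β with hqdef
  have hq0 : 0 < q := by linarith
  have hq1 : q < 1 := by linarith
  have hlim : Tendsto (fun N : ℕ => q / (1 - β * q * q ^ N)) atTop (nhds (q / (1 - β * q * 0))) := by
    have := tendsto_pow_atTop_nhds_zero_of_lt_one hq0.le hq1
    exact tendsto_const_nhds.div (tendsto_const_nhds.sub (this.const_mul _)) (by simp)
  have hlim2 : Tendsto (fun N : ℕ => β * q * q ^ N) atTop (nhds (β * q * 0)) :=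
    (tendsto_pow_atTop_nhds_zero_of_lt_one hq0.le hq1).const_mul _
  have ev1 := hlim.eventually_lt_const (show q / (1 - β * q * 0) < 1 - β * t by simp; linarith)
  have ev2 := hlim2.eventually_lt_const (show β * q * 0 < 1 by simp)
  obtain ⟨N, hN1, hN2⟩ := (ev1.and ev2).exists
  set c := β * q * q ^ N with hc
  have hc0 : 0 < c := by positivity
  have hgle := gfun_le hc0 hN2 hq0 hq1
  have hgge := le_gfun hc0 hN2 hq0 hq1
  have hsurv : ∀ n w, Psurv β t n (1 - gfun c q w) := by
    intro n
    induction n with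
    | zero =>
      intro w
      exact ⟨⟨by linarith [hgle w], by linarith [hgge w]⟩, fun i hi => by omega⟩
    | succ n ih =>
      intro w
      have hP := ih (fun i => w (i + 1))
      have hx : β * t ≤ 1 - gfun c q (fun i => w (i + 1)) := by
        linarith [hgle (fun i => w (i + 1))]
      rw [gfun_rec hc0 hN2 hq0 hq1 w]
      have main : ∀ k, Psurv β t (n + 1)
          (1 - (q + β * q * q ^ k * gfun c q (fun i => w (i + 1)))) := by
        intro k
        obtain ⟨a1, a2⟩ := Psurv_iter h1 h2 hq ht k hP hx
        have := Psurv_Dm h1 h2 hq ht a1 a2 (Nat.sub_le m 1)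
        rw [Dm_pred h1 hm hq] at this
        convert this using 1
        rw [hqdef]; ring
      unfold rho
      split_ifs
      · exact main N
      · have := main (N + 1)
        rw [pow_succ, ← mul_assoc] at this
        exact this
  refine dim_pos_of_sep (fun w => 1 - gfun c q w) (fun w => ⟨(hsurv 0 w).1,
    fun n => (hsurv (n + 1) w).2 n (by omega)⟩) (ρ := c * q) (δ := c * q * (1 - q / (1 - c)))
    (by positivity) (by nlinarith) ?_ ?_
  · apply mul_pos (by positivity); linarith
  · intro n w v hag hne
    have := gfun_sep hc0 hN2 hq0 hq1 n w v hag hne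
    rw [abs_sub_comm] at this
    convert this using 2
    ring

end aux

/-- For a multinacci `β ∈ (1,2)` and `t ∈ [0,1)`,
`dim_H K_β(t) > 0` if and only if `t < 1 - 1/β`. -/
theorem stmt_12 (β : ℝ) (hβ : β ∈ Set.Ioo (1 : ℝ) 2) (hmulti : IsMultinacci β) :
    ∀ t ∈ Set.Ico (0 : ℝ) 1, (0 < dimH (Kset β t) ↔ t < 1 - 1 / β) := by
  intro t ht
  obtain ⟨h1, h2⟩ := hβ
  obtain ⟨m, hm, hmul⟩ := hmulti
  have hq := multi_q h1 hmul
  constructor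
  · intro hd
    by_contra! hle
    rw [Kset_empty h1 h2 hq hle, dimH_empty] at hd
    exact lt_irrefl _ hd
  · intro hlt
    exact dim_pos h1 h2 hm hq ht.1 hlt
end
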